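/- arXiv:2005.02604 — 10 statements merged into one kernel-verified Lean document; each statement's English description precedes it below -/
import Mathlib

section
/- Let h be a symmetric bilinear form on V with associated symmetric endomorphism H, and let T be a (0,k)-tensor on V. Then for all X_1,…,X_k ∈ V: Ric_{h⧆g}(T)(X_1,…,X_k) = 2·Σ_{i≠j} (T∘τ_{ij})(X_1,…,H(X_i),…,X_k) − Σ_{i≠j} g(X_i,X_j)·c_{ij}(h⊗T)(X_1,…,X̂_i,…,X̂_j,…,X_k) − Σ_{i≠j} h(X_i,X_j)·c_{ij}(g⊗T)(X_1,…,X̂_i,…,X̂_j,…,X_k) − (n−2)·(HT)(X_1,…,X_k) + k·tr(h)·T(X_1,…,X_k), where in (T∘τ_{ij}) the argument H(X_i) occupies the i-th slot (and the l-th slot holds X_l for l ≠ i), sums over i≠j run over ordered pairs 1 ≤ i,j ≤ k, and hats denote omitted arguments. -/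
/-!
The curvature operator of `h ⧆ g` is
`R(X,Y)Z = h(X,Z) Y - g(Y,Z) H X + g(X,Z) H Y - h(Y,Z) X` (`curvOp_knProd`).
In `Ric(T)(X₁,…,X_k)` the endomorphism `R(Xᵢ,eⱼ)` hits either the slot `i`, which holds `eⱼ`, or
another slot `m`, which holds `X_m`. Expanding vectors in the orthonormal basis, the sum over `j`
of the first kind of terms is `(n-2) T(…,H Xᵢ,…) + tr(h) T` (`ric_diag`), which gives the last two
summands of the formula. The second kind (`ric_offdiag`) yields the two contraction terms and two
terms with `Xᵢ`, `X_m` exchanged, one of them carrying `H Xᵢ` and the other `H X_m`; these two agree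
after summation over all ordered pairs `i ≠ m`, which explains the factor `2`.
-/

open scoped RealInnerProductSpace BigOperators
open Finset

noncomputable section

variable {V : Type*} [NormedAddCommGroup V] [InnerProductSpace ℝ V]

/-- The action `(L T)(X₁,…,X_k) = −Σᵢ T(X₁,…,L(Xᵢ),…,X_k)` of a map `L : V → V`
on a `(0,k)`-tensor `T`. -/
def tact {k : ℕ} (L : V → V) (T : (Fin k → V) → ℝ) (X : Fin k → V) : ℝ :=
  -∑ i, T (Function.update X i (L (X i)))

/-- The Kulkarni–Nomizu product of two bilinear forms. -/
def knProd (s₁ s₂ : V → V → ℝ) (X Y Z W : V) : ℝ :=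
  s₁ X Z * s₂ Y W - s₁ X W * s₂ Y Z + s₁ Y W * s₂ X Z - s₁ Y Z * s₂ X W

/-- The inner product `g` as a bilinear form. -/
def gf (X Y : V) : ℝ := ⟪X, Y⟫

/-- The curvature endomorphism `R(X,Y)`, determined by `g(R(X,Y)Z,W) = R(X,Y,Z,W)`,
expressed via the orthonormal basis `e`. -/
def curvOp {n : ℕ} (e : Fin n → V) (R : V → V → V → V → ℝ) (X Y Z : V) : V :=
  ∑ a, R X Y Z (e a) • e a

/-- The curvature term `Ric_R(T)(X₁,…,X_k) = Σᵢ Σⱼ ((R(Xᵢ,eⱼ))T)(X₁,…,eⱼ,…,X_k)`. -/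
def ricTerm {n k : ℕ} (e : Fin n → V) (R : V → V → V → V → ℝ)
    (T : (Fin k → V) → ℝ) (X : Fin k → V) : ℝ :=
  ∑ i : Fin k, ∑ j : Fin n, tact (curvOp e R (X i) (e j)) T (Function.update X i (e j))

/-- The inner product of two `(0,k)`-tensors with respect to the orthonormal basis `e`. -/
def tinner {n k : ℕ} (e : Fin n → V) (S T : (Fin k → V) → ℝ) : ℝ :=
  ∑ I : Fin k → Fin n, S (fun m => e (I m)) * T (fun m => e (I m))

/-- The skew endomorphism `(A ∧ B)Z = g(A,Z)B − g(B,Z)A`. -/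
def wedgeOp (A B Z : V) : V := ⟪A, Z⟫ • B - ⟪B, Z⟫ • A

theorem sum_inner_smul_map {n : ℕ} (e : OrthonormalBasis (Fin n) ℝ V) (L : V →ₗ[ℝ] ℝ) (v : V) :
    ∑ j, ⟪e j, v⟫ * L (e j) = L v := by
  conv_rhs => rw [← e.sum_repr' v]
  simp

theorem curvOp_knProd {n : ℕ} (e : OrthonormalBasis (Fin n) ℝ V)
    (H : V →ₗ[ℝ] V) (h : V → V → ℝ) (hh : ∀ X Y : V, h X Y = ⟪H X, Y⟫) (X Y Z : V) :
    curvOp ⇑e (knProd h gf) X Y Z =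
      h X Z • Y - ⟪Y, Z⟫ • H X + ⟪X, Z⟫ • H Y - h Y Z • X := by
  have key : ∀ W : V, ⟪h X Z • Y - ⟪Y, Z⟫ • H X + ⟪X, Z⟫ • H Y - h Y Z • X, W⟫
      = knProd h gf X Y Z W := by
    intro W
    simp only [knProd, gf, inner_sub_left, inner_add_left, real_inner_smul_left, hh]
    ring
  unfold curvOp
  conv_rhs => rw [← e.sum_repr' (h X Z • Y - ⟪Y, Z⟫ • H X + ⟪X, Z⟫ • H Y - h Y Z • X)]
  refine Finset.sum_congr rfl fun a _ => ?_
  rw [real_inner_comm, key]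

/-- The contribution of `R(x, eⱼ)` acting on the slot that holds `eⱼ`, with `L` the tensor as a
function of that slot; the minus sign of the action `tact` is left out. -/
theorem ric_diag {n : ℕ} (e : OrthonormalBasis (Fin n) ℝ V)
    (H : V →ₗ[ℝ] V)
    (h : V → V → ℝ) (hh : ∀ X Y : V, h X Y = ⟪H X, Y⟫) (L : V →ₗ[ℝ] ℝ) (x : V) :
    ∑ j, L (curvOp ⇑e (knProd h gf) x (e j) (e j)) =
      -((n : ℝ) - 2) * L (H x) - (∑ a, h (e a) (e a)) * L x := by
  have h1 : ∑ j, h x (e j) * L (e j) = L (H x) := by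
    rw [← sum_inner_smul_map e L (H x)]
    exact Finset.sum_congr rfl fun j _ => by rw [hh, real_inner_comm]
  have h2 : ∑ j, ⟪x, e j⟫ * L (H (e j)) = L (H x) := by
    have := sum_inner_smul_map e (L ∘ₗ H) x
    simp only [LinearMap.comp_apply] at this
    rw [← this]
    exact Finset.sum_congr rfl fun j _ => by rw [real_inner_comm]
  have h3 : ∀ j, ⟪e j, e j⟫ = (1 : ℝ) := fun j => by
    rw [real_inner_self_eq_norm_sq, e.norm_eq_one]; norm_num
  simp only [curvOp_knProd e H h hh, map_sub, map_add, map_smul, smul_eq_mul, h3,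
    Finset.sum_sub_distrib, Finset.sum_add_distrib, h1, h2, ← Finset.sum_mul]
  simp
  ring

/-- The contribution of `R(x, eⱼ)` acting on a slot that holds `z`, while `eⱼ` sits in another slot;
`B` is the tensor as a function of these two slots, and the minus sign of `tact` is left out. -/
theorem ric_offdiag {n : ℕ} (e : OrthonormalBasis (Fin n) ℝ V)
    (H : V →ₗ[ℝ] V) (hHsym : ∀ X Y : V, ⟪H X, Y⟫ = ⟪X, H Y⟫)
    (h : V → V → ℝ) (hh : ∀ X Y : V, h X Y = ⟪H X, Y⟫) (B : V →ₗ[ℝ] V →ₗ[ℝ] ℝ) (x z : V) :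
    ∑ j, B (e j) (curvOp ⇑e (knProd h gf) x (e j) z) =
      h x z * (∑ a, ∑ b, ⟪e a, e b⟫ * B (e a) (e b)) - B z (H x)
      + ⟪x, z⟫ * (∑ a, ∑ b, h (e a) (e b) * B (e a) (e b)) - B (H z) x := by
  have h1 : ∀ v w, ∑ j, ⟪e j, v⟫ * B (e j) w = B v w := fun v w =>
    sum_inner_smul_map e (B.flip w) v
  have h2 : ∑ j, h (e j) z * B (e j) x = B (H z) x := by
    rw [← h1]
    exact Finset.sum_congr rfl fun j _ => by rw [hh, hHsym]
  have h3 : ∀ a, ∑ b, h (e a) (e b) * B (e a) (e b) = B (e a) (H (e a)) := fun a => by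
    rw [← sum_inner_smul_map e (B (e a)) (H (e a))]
    exact Finset.sum_congr rfl fun j _ => by rw [hh, real_inner_comm]
  have h4 : ∀ a, ∑ b, ⟪e a, e b⟫ * B (e a) (e b) = B (e a) (e a) := fun a => by
    rw [← sum_inner_smul_map e (B (e a)) (e a)]
    exact Finset.sum_congr rfl fun j _ => by rw [real_inner_comm]
  simp only [curvOp_knProd e H h hh, map_sub, map_add, map_smul, smul_eq_mul,
    Finset.sum_sub_distrib, Finset.sum_add_distrib, h1, h2, h3, h4, ← Finset.mul_sum]

/-- A multilinear map as a bilinear map of the slots `i ≠ m`, the other slots being frozen at `X`. -/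
def slotPair {k : ℕ} (T : MultilinearMap ℝ (fun _ : Fin k => V) ℝ) (X : Fin k → V)
    (i m : Fin k) (him : i ≠ m) : V →ₗ[ℝ] V →ₗ[ℝ] ℝ :=
  LinearMap.mk₂ ℝ (fun a b => T (Function.update (Function.update X i a) m b))
    (fun a a' b => by
      simp only [Function.update_comm him]
      exact T.map_update_add _ _ _ _)
    (fun c a b => by
      simp only [Function.update_comm him]
      exact T.map_update_smul _ _ _ _)
    (fun a b b' => T.map_update_add _ _ _ _)
    (fun c a b => T.map_update_smul _ _ _ _)

/-- Proposition `GeneralFormulaBochnerOnHWedgeG`: the curvature term of the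
Lichnerowicz Laplacian for the curvature tensor `h ⧆ g`. -/
theorem stmt0 {n k : ℕ} (e : OrthonormalBasis (Fin n) ℝ V)
    (H : V →ₗ[ℝ] V) (hHsym : ∀ X Y : V, ⟪H X, Y⟫ = ⟪X, H Y⟫)
    (h : V → V → ℝ) (hh : ∀ X Y : V, h X Y = ⟪H X, Y⟫)
    (T : MultilinearMap ℝ (fun _ : Fin k => V) ℝ) :
    ∀ X : Fin k → V,
      ricTerm ⇑e (knProd h gf) ⇑T X =
        2 * (∑ i : Fin k, ∑ j : Fin k, if i = j then 0 else
              T (Function.update (Function.update X i (X j)) j (H (X i))))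
        - (∑ i : Fin k, ∑ j : Fin k, if i = j then 0 else
            ⟪X i, X j⟫ *
              ∑ a : Fin n, ∑ b : Fin n, h (e a) (e b) *
                T (Function.update (Function.update X i (e a)) j (e b)))
        - (∑ i : Fin k, ∑ j : Fin k, if i = j then 0 else
            h (X i) (X j) *
              ∑ a : Fin n, ∑ b : Fin n, ⟪e a, e b⟫ *
                T (Function.update (Function.update X i (e a)) j (e b)))
        - ((n : ℝ) - 2) * tact ⇑H ⇑T X
        + (k : ℝ) * (∑ a : Fin n, h (e a) (e a)) * T X := by
  intro X
  have slot : ∀ i m : Fin k,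
      ∑ j, T (Function.update (Function.update X i (e j)) m
        (curvOp ⇑e (knProd h gf) (X i) (e j) (Function.update X i (e j) m))) =
      (if i = m then
        -((n : ℝ) - 2) * T (Function.update X i (H (X i))) - (∑ a, h (e a) (e a)) * T X else 0)
      + (if i = m then 0 else h (X i) (X m) * ∑ a : Fin n, ∑ b : Fin n, ⟪e a, e b⟫ *
                T (Function.update (Function.update X i (e a)) m (e b)))
      - (if i = m then 0 else T (Function.update (Function.update X i (X m)) m (H (X i))))
      + (if i = m then 0 else ⟪X i, X m⟫ * ∑ a : Fin n, ∑ b : Fin n, h (e a) (e b) *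
                T (Function.update (Function.update X i (e a)) m (e b)))
      - (if i = m then 0 else T (Function.update (Function.update X i (H (X m))) m (X i))) := by
    intro i m
    by_cases him : i = m
    · subst him
      have := ric_diag e H h hh (T.toLinearMap X i) (X i)
      simpa using this
    · have := ric_offdiag e H hHsym h hh (slotPair T X i m him) (X i) (X m)
      simp only [slotPair, LinearMap.mk₂_apply] at this
      simpa [him, Function.update_of_ne (Ne.symm him)] using this
  -- Exchanging the roles of `i` and `m` identifies the two families of transposed terms.
  have swap : (∑ i : Fin k, ∑ m : Fin k, if i = m then 0 else
        T (Function.update (Function.update X i (H (X m))) m (X i))) =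
      ∑ i : Fin k, ∑ m : Fin k, if i = m then 0 else
        T (Function.update (Function.update X i (X m)) m (H (X i))) := by
    rw [Finset.sum_comm]
    refine Finset.sum_congr rfl fun i _ => Finset.sum_congr rfl fun m _ => ?_
    by_cases him : i = m
    · simp [him]
    · rw [if_neg him, if_neg (Ne.symm him), Function.update_comm (Ne.symm him)]
  have expand : ricTerm ⇑e (knProd h gf) ⇑T X = -∑ i : Fin k, ∑ m : Fin k,
      ∑ j, T (Function.update (Function.update X i (e j)) m
        (curvOp ⇑e (knProd h gf) (X i) (e j) (Function.update X i (e j) m))) := by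
    simp only [ricTerm, tact, Finset.sum_neg_distrib]
    congr 1
    exact Finset.sum_congr rfl fun i _ => Finset.sum_comm
  rw [expand]
  simp only [slot, Finset.sum_add_distrib, Finset.sum_sub_distrib, swap]
  simp only [Finset.sum_ite_eq, Finset.mem_univ, if_true, Finset.sum_sub_distrib,
    ← Finset.mul_sum, Finset.sum_const, Finset.card_univ, Fintype.card_fin, nsmul_eq_mul, tact]
  ring
end
end

section
/- Let h be a symmetric bilinear form on V with associated symmetric endomorphism H, and let T be a (0,k)-tensor on V. Then for all X_1,…,X_k ∈ V: Σ_{i=1}^k Σ_{a=1}^n ((X_i ∧ H(e_a))T)(X_1,…,e_a,…,X_k) = Σ_{i≠j} (T∘τ_{ij})(X_1,…,H(X_i),…,X_k) − Σ_{i≠j} g(X_i,X_j)·c_{ij}(h⊗T)(X_1,…,X̂_i,…,X̂_j,…,X_k) + k·tr(h)·T(X_1,…,X_k) + (HT)(X_1,…,X_k), where on the left e_a occupies the i-th slot, (A ∧ B) denotes the skew endomorphism (A ∧ B)Z = g(A,Z)B − g(B,Z)A, and in (T∘τ_{ij}) the argument H(X_i) occupies the i-th slot (and the l-th slot holds X_l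 for l ≠ i). -/
/-!
Expand `(Xᵢ ∧ H eₐ)T` at `(X₁,…,eₐ,…,X_k)` as a sum over the slot `j` on which the endomorphism
acts, and sum over `a` with the expansion `v = Σₐ g(v,eₐ) eₐ` (`sum_inner_mul_update`).
For `j = i` the sum is `tr(h) T(X) − T(…,H Xᵢ,…)` (`sum_wedge_diag`); for `j ≠ i`, symmetry of `H`
gives `T` with `H Xⱼ` in slot `i` and `Xᵢ` in slot `j`, minus `g(Xᵢ,Xⱼ) c_{ij}(h⊗T)`
(`sum_wedge_offdiag`). Exchanging the names `i` and `j` in the first of these terms gives the claim.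
-/

open scoped RealInnerProductSpace BigOperators
open Finset

noncomputable section

variable {V : Type*} [NormedAddCommGroup V] [InnerProductSpace ℝ V]

/-- The expansion of a vector in an orthonormal basis, mapped by `L` into the
`i`-th slot of `T`. -/
theorem sum_inner_mul_update {n k : ℕ} (e : OrthonormalBasis (Fin n) ℝ V)
    (L : V →ₗ[ℝ] V) (T : MultilinearMap ℝ (fun _ : Fin k => V) ℝ) (Y : Fin k → V)
    (i : Fin k) (v : V) :
    ∑ a, ⟪v, e a⟫ * T (Function.update Y i (L (e a))) = T (Function.update Y i (L v)) := by
  conv_rhs => rw [← e.sum_repr' v]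
  rw [map_sum, T.map_update_sum]
  refine Finset.sum_congr rfl fun a _ => ?_
  rw [map_smul, T.map_update_smul, smul_eq_mul, real_inner_comm]

/-- The `j = i` part of the left-hand side, up to the sign in `tact`: it yields
the trace term and one summand of `HT`. -/
theorem sum_wedge_diag {n k : ℕ} (e : OrthonormalBasis (Fin n) ℝ V) (H : V →ₗ[ℝ] V)
    (T : MultilinearMap ℝ (fun _ : Fin k => V) ℝ) (X : Fin k → V) (i : Fin k) :
    ∑ a, T (Function.update X i (wedgeOp (X i) (H (e a)) (e a))) =
      T (Function.update X i (H (X i))) - (∑ a, ⟪H (e a), e a⟫) * T X := by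
  rw [← sum_inner_mul_update e H T X i (X i), Finset.sum_mul, ← Finset.sum_sub_distrib]
  refine Finset.sum_congr rfl fun a _ => ?_
  rw [wedgeOp, T.map_update_sub, T.map_update_smul, T.map_update_smul,
    Function.update_eq_self, smul_eq_mul, smul_eq_mul]

/-- The `j ≠ i` part of the left-hand side, up to the sign in `tact`: it yields
one contraction term and the
transposition term, with the roles of `i` and `j` exchanged. -/
theorem sum_wedge_offdiag {n k : ℕ} (e : OrthonormalBasis (Fin n) ℝ V) (H : V →ₗ[ℝ] V)
    (hHsym : ∀ X Y : V, ⟪H X, Y⟫ = ⟪X, H Y⟫)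
    (T : MultilinearMap ℝ (fun _ : Fin k => V) ℝ) (X : Fin k → V) {i j : Fin k} (hij : i ≠ j) :
    ∑ a, T (Function.update (Function.update X i (e a)) j
        (wedgeOp (X i) (H (e a)) (X j))) =
      ⟪X i, X j⟫ * ∑ a, ∑ b, ⟪H (e a), e b⟫ *
          T (Function.update (Function.update X i (e a)) j (e b))
        - T (Function.update (Function.update X j (X i)) i (H (X j))) := by
  have h1 := sum_inner_mul_update e LinearMap.id T (Function.update X j (X i)) i (H (X j))
  simp only [LinearMap.id_apply] at h1
  rw [← h1, Finset.mul_sum, ← Finset.sum_sub_distrib]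
  refine Finset.sum_congr rfl fun a _ => ?_
  have h2 := sum_inner_mul_update e LinearMap.id T (Function.update X i (e a)) j (H (e a))
  simp only [LinearMap.id_apply] at h2
  rw [h2, wedgeOp, T.map_update_sub, T.map_update_smul, T.map_update_smul, smul_eq_mul,
    smul_eq_mul, hHsym, real_inner_comm (e a), Function.update_comm hij (e a) (X i) X]

/-- the first half of the computation in the proof of Proposition 3.2. -/
theorem stmt1 {n k : ℕ} (e : OrthonormalBasis (Fin n) ℝ V)
    (H : V →ₗ[ℝ] V) (hHsym : ∀ X Y : V, ⟪H X, Y⟫ = ⟪X, H Y⟫)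
    (h : V → V → ℝ) (hh : ∀ X Y : V, h X Y = ⟪H X, Y⟫)
    (T : MultilinearMap ℝ (fun _ : Fin k => V) ℝ) :
    ∀ X : Fin k → V,
      (∑ i : Fin k, ∑ a : Fin n,
          tact (wedgeOp (X i) (H (e a))) ⇑T (Function.update X i (e a))) =
        (∑ i : Fin k, ∑ j : Fin k, if i = j then 0 else
            T (Function.update (Function.update X i (X j)) j (H (X i))))
        - (∑ i : Fin k, ∑ j : Fin k, if i = j then 0 else
            ⟪X i, X j⟫ *
              ∑ a : Fin n, ∑ b : Fin n, h (e a) (e b) *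
                T (Function.update (Function.update X i (e a)) j (e b)))
        + (k : ℝ) * (∑ a : Fin n, h (e a) (e a)) * T X
        + tact ⇑H ⇑T X := by
  intro X
  have key : ∀ i : Fin k,
      ∑ a, tact (wedgeOp (X i) (H (e a))) ⇑T (Function.update X i (e a)) =
        (∑ j, if i = j then 0 else
          T (Function.update (Function.update X j (X i)) i (H (X j))))
        - (∑ j, if i = j then 0 else
            ⟪X i, X j⟫ *
              ∑ a : Fin n, ∑ b : Fin n, h (e a) (e b) *
                T (Function.update (Function.update X i (e a)) j (e b)))
        + ((∑ a : Fin n, h (e a) (e a)) * T X - T (Function.update X i (H (X i)))) := by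
    intro i
    simp only [tact, Finset.sum_neg_distrib, hh]
    rw [Finset.sum_comm, ← Finset.sum_sub_distrib, ← Finset.add_sum_erase _ _ (mem_univ i),
      ← Finset.add_sum_erase univ (fun j => ite _ _ _ - _) (mem_univ i)]
    simp only [Function.update_self, Function.update_idem, sum_wedge_diag, if_true]
    have : ∀ j ∈ univ.erase i, (∑ a, T (Function.update (Function.update X i (e a)) j
        (wedgeOp (X i) (H (e a)) (Function.update X i (e a) j)))) =
        -((if i = j then 0 else
          T (Function.update (Function.update X j (X i)) i (H (X j)))) -
          if i = j then 0 else ⟪X i, X j⟫ * ∑ a, ∑ b, ⟪H (e a), e b⟫ *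
          T (Function.update (Function.update X i (e a)) j (e b))) := by
      intro j hj
      have hji : j ≠ i := Finset.ne_of_mem_erase hj
      simp only [Function.update_of_ne hji, if_neg hji.symm]
      rw [sum_wedge_offdiag e H hHsym T X hji.symm]
      ring
    rw [Finset.sum_congr rfl this, Finset.sum_neg_distrib]
    ring
  rw [Finset.sum_congr rfl fun i _ => key i, Finset.sum_add_distrib, Finset.sum_sub_distrib,
    Finset.sum_sub_distrib, Finset.sum_comm]
  simp only [tact, Finset.sum_const, Finset.card_univ, Fintype.card_fin, nsmul_eq_mul,
    eq_comm (a := (_ : Fin k))]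
  ring
end
end

section
/- Let h be a symmetric bilinear form on V with associated symmetric endomorphism H. Every symmetric (0,2)-tensor T on V satisfies ⟨Ric_{h⧆g}(T), T⟩ = −n·⟨HT, T⟩ − 4·tr(T)·⟨T,h⟩ + 2·tr(h)·|T|², where (HT)(X,Y) = −T(H(X),Y) − T(X,H(Y)), ⟨T,h⟩ = Σ_{a,b} T(e_a,e_b)h(e_a,e_b), and tr(T) = Σ_a T(e_a,e_a). -/
/-!
In the orthonormal basis write `t a b = T(e_a, e_b)` and `m a b = h(e_a, e_b)`, both symmetric.
By bilinearity and the symmetry of `T`, the two slots contribute `F a b` and `F b a` to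
`Ric_{h ⧆ g}(T)(e_a, e_b)`, where `F a b` (the left side of `slot_sum`) contracts the components
of `h ⧆ g` with `t`. Carrying out the Kronecker-delta contractions gives
`F a b = (n - 2) (m t) a b + tr(m) t a b - m a b tr(t) + (m t) a b + (t m) a b - δ a b ⟨m, t⟩`.
Pairing with `t` turns each of the three products of `m` and `t` into `tr(m t²)`, so
`⟨F, t⟩ = n tr(m t²) + tr(m) |t|² - 2 tr(t) ⟨m, t⟩` (`slot_pairing`). Doubling this and using
`⟨HT, T⟩ = -2 tr(m t²)` yields the identity.
-/

open scoped RealInnerProductSpace BigOperators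
open Finset

noncomputable section

variable {V : Type*} [NormedAddCommGroup V] [InnerProductSpace ℝ V]

/-- Components of `h ⧆ g` in an orthonormal basis, where `m` is the matrix of `h`. -/
def knCoeff {n : ℕ} (m : Fin n → Fin n → ℝ) (a j b c : Fin n) : ℝ :=
  m a b * (if j = c then 1 else 0) - m a c * (if j = b then 1 else 0)
    + m j c * (if a = b then 1 else 0) - m j b * (if a = c then 1 else 0)

/-- The contribution of one slot to the curvature term, with all deltas contracted. -/
lemma slot_sum {n : ℕ} (m t : Fin n → Fin n → ℝ) (a b : Fin n) :
    ∑ j, -((∑ c, knCoeff m a j j c * t c b) + ∑ c, knCoeff m a j b c * t j c) =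
      ((n : ℝ) - 2) * (∑ c, m a c * t c b) + (∑ c, m c c) * t a b
        - m a b * (∑ c, t c c) + (∑ c, m a c * t b c) + (∑ c, m c b * t c a)
        - (if a = b then 1 else 0) * ∑ j, ∑ c, m j c * t j c := by
  have h1 : ∑ j, ∑ c, knCoeff m a j j c * t c b =
      (2 - (n : ℝ)) * (∑ c, m a c * t c b) - (∑ c, m c c) * t a b := by
    simp only [knCoeff, sub_mul, add_mul, Finset.sum_sub_distrib, Finset.sum_add_distrib]
    simp [Finset.sum_mul, Finset.mul_sum]
    simp only [← Finset.mul_sum]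
    ring
  have h2 : ∑ j, ∑ c, knCoeff m a j b c * t j c =
      m a b * (∑ c, t c c) - (∑ c, m a c * t b c)
        + (if a = b then 1 else 0) * (∑ j, ∑ c, m j c * t j c) - (∑ c, m c b * t c a) := by
    simp only [knCoeff, sub_mul, add_mul, Finset.sum_sub_distrib, Finset.sum_add_distrib]
    congr 1
    · congr 1
      · simp [Finset.mul_sum]
      · simp only [Finset.mul_sum]
        exact Finset.sum_congr rfl fun j _ => Finset.sum_congr rfl fun c _ => by ring
    · simp
  rw [Finset.sum_neg_distrib, Finset.sum_add_distrib, h1, h2]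
  ring

/-- Pairing the one-slot contribution with the symmetric tensor `t`. -/
lemma slot_pairing {n : ℕ} (m t : Fin n → Fin n → ℝ) (hm : ∀ a b, m a b = m b a)
    (ht : ∀ a b, t a b = t b a) :
    ∑ a, ∑ b, (∑ j, -((∑ c, knCoeff m a j j c * t c b)
        + ∑ c, knCoeff m a j b c * t j c)) * t a b =
      (n : ℝ) * (∑ a, ∑ b, (∑ c, m a c * t c b) * t a b)
        + (∑ c, m c c) * (∑ a, ∑ b, t a b * t a b)
        - 2 * (∑ c, t c c) * (∑ a, ∑ b, t a b * m a b) := by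
  have h1 : ∑ a, ∑ b, (∑ c, m a c * t b c) * t a b
      = ∑ a, ∑ b, (∑ c, m a c * t c b) * t a b := by
    simp only [fun b c => ht b c]
  have h2 : ∑ a, ∑ b, (∑ c, m c b * t c a) * t a b
      = ∑ a, ∑ b, (∑ c, m a c * t c b) * t a b := by
    rw [Finset.sum_comm]
    refine Finset.sum_congr rfl fun a _ => Finset.sum_congr rfl fun b _ => ?_
    simp only [hm _ a, ht b a]
  have h3 : ∑ a, ∑ b, ((if a = b then 1 else 0) * ∑ j, ∑ c, m j c * t j c) * t a b
      = (∑ c, t c c) * (∑ a, ∑ b, t a b * m a b) := by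
    simp [Finset.sum_mul, mul_comm]
  have h4 : ∑ a, ∑ b, (m a b * ∑ c, t c c) * t a b
      = (∑ c, t c c) * (∑ a, ∑ b, t a b * m a b) := by
    simp only [Finset.mul_sum (s := Finset.univ) (f := fun a => ∑ b, t a b * m a b),
      Finset.mul_sum (s := Finset.univ) (f := fun b => t _ b * m _ b)]
    exact Finset.sum_congr rfl fun a _ => Finset.sum_congr rfl fun b _ => by ring
  simp only [slot_sum m t]
  simp only [sub_mul _ _ (t _ _), add_mul _ _ (t _ _), Finset.sum_sub_distrib,
    Finset.sum_add_distrib]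
  rw [h1, h2, h3, h4]
  simp only [mul_assoc, ← Finset.mul_sum]
  ring

lemma tinner_two {n : ℕ} (e : Fin n → V) (S T : (Fin 2 → V) → ℝ) :
    tinner e S T = ∑ a, ∑ b, S ![e a, e b] * T ![e a, e b] := by
  unfold tinner
  rw [← (finTwoArrowEquiv (Fin n)).symm.sum_comp, Fintype.sum_prod_type]
  refine Finset.sum_congr rfl fun a _ => Finset.sum_congr rfl fun b _ => ?_
  have : (fun k => e ((finTwoArrowEquiv (Fin n)).symm (a, b) k)) = ![e a, e b] := by
    ext k; fin_cases k <;> rfl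
  rw [this]

lemma update_zero (X Y Z : V) : Function.update ![X, Y] 0 Z = ![Z, Y] := by
  ext k; fin_cases k <;> rfl

lemma update_one (X Y Z : V) : Function.update ![X, Y] 1 Z = ![X, Z] := by
  ext k; fin_cases k <;> rfl

lemma tact_two (L : V → V) (T : (Fin 2 → V) → ℝ) (X Y : V) :
    tact L T ![X, Y] = -(T ![L X, Y] + T ![X, L Y]) := by
  simp [tact, Fin.sum_univ_two, update_zero, update_one]

lemma map_sum_left {n : ℕ} (T : MultilinearMap ℝ (fun _ : Fin 2 => V) ℝ)
    (c : Fin n → ℝ) (v : Fin n → V) (Y : V) :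
    T ![∑ a, c a • v a, Y] = ∑ a, c a * T ![v a, Y] := by
  have := T.map_update_sum Finset.univ 0 (fun a => c a • v a) ![0, Y]
  simp only [update_zero] at this
  rw [this]
  refine Finset.sum_congr rfl fun a _ => ?_
  have hs := T.map_update_smul ![0, Y] 0 (c a) (v a)
  simpa only [update_zero, smul_eq_mul] using hs

/-- Proposition 3.3(1), second identity. -/
theorem stmt4 {n : ℕ} (e : OrthonormalBasis (Fin n) ℝ V)
    (H : V →ₗ[ℝ] V) (hHsym : ∀ X Y : V, ⟪H X, Y⟫ = ⟪X, H Y⟫)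
    (h : V → V → ℝ) (hh : ∀ X Y : V, h X Y = ⟪H X, Y⟫)
    (T : MultilinearMap ℝ (fun _ : Fin 2 => V) ℝ)
    (hTsym : ∀ X Y : V, T ![X, Y] = T ![Y, X]) :
    tinner ⇑e (ricTerm ⇑e (knProd h gf) ⇑T) ⇑T =
      -(n : ℝ) * tinner ⇑e (tact ⇑H ⇑T) ⇑T
      - 4 * (∑ a : Fin n, T ![e a, e a]) *
          (∑ a : Fin n, ∑ b : Fin n, T ![e a, e b] * h (e a) (e b))
      + 2 * (∑ a : Fin n, h (e a) (e a)) * tinner ⇑e ⇑T ⇑T := by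
  set t : Fin n → Fin n → ℝ := fun a b => T ![e a, e b] with ht_def
  set m : Fin n → Fin n → ℝ := fun a b => h (e a) (e b) with hm_def
  have ht : ∀ a b, t a b = t b a := fun a b => hTsym _ _
  have hm : ∀ a b, m a b = m b a := fun a b => by
    simp only [hm_def, hh]
    rw [hHsym, real_inner_comm]
  have hkn : ∀ a j b c, knProd h gf (e a) (e j) (e b) (e c) = knCoeff m a j b c := by
    intro a j b c
    simp only [knProd, gf, knCoeff, hm_def, e.inner_eq_ite]
  have hcurv : ∀ a j b Y, T ![curvOp e (knProd h gf) (e a) (e j) (e b), Y]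
      = ∑ c, knCoeff m a j b c * T ![e c, Y] := by
    intro a j b Y
    simp only [curvOp, map_sum_left, hkn]
  have hH : ∀ a Y, T ![H (e a), Y] = ∑ c, m a c * T ![e c, Y] := by
    intro a Y
    rw [← map_sum_left]
    congr 2
    rw [← e.sum_repr' (H (e a))]
    refine Finset.sum_congr rfl fun c _ => ?_
    simp only [hm_def, hh, real_inner_comm]
  let F : Fin n → Fin n → ℝ := fun a b =>
    ∑ j, -((∑ c, knCoeff m a j j c * t c b) + ∑ c, knCoeff m a j b c * t j c)
  have hric : ∀ a b, ricTerm e (knProd h gf) T ![e a, e b] = F a b + F b a := by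
    intro a b
    simp only [ricTerm, Fin.sum_univ_two, update_zero, update_one, tact_two,
      Matrix.cons_val_zero, Matrix.cons_val_one]
    congr 1
    · refine Finset.sum_congr rfl fun j _ => ?_
      rw [hTsym (e j), hcurv, hcurv]
      simp only [hTsym _ (e j), ht_def]
    · refine Finset.sum_congr rfl fun j _ => ?_
      rw [hTsym (e a), hcurv, hcurv, add_comm]
      simp only [hTsym _ (e j), ht_def]
  have hact : ∀ a b, tact H T ![e a, e b]
      = -((∑ c, m a c * t c b) + ∑ c, m b c * t c a) := by
    intro a b
    rw [tact_two, hTsym (e a), hH, hH]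
  have hswap : ∀ G : Fin n → Fin n → ℝ,
      ∑ a, ∑ b, G b a * t a b = ∑ a, ∑ b, G a b * t a b := by
    intro G
    rw [Finset.sum_comm]
    exact Finset.sum_congr rfl fun a _ => Finset.sum_congr rfl fun b _ => by rw [ht b a]
  have hF := slot_pairing m t hm ht
  have hHT : ∑ a, ∑ b, tact H T ![e a, e b] * t a b
      = -2 * ∑ a, ∑ b, (∑ c, m a c * t c b) * t a b := by
    simp only [hact, neg_mul, add_mul, Finset.sum_neg_distrib, Finset.sum_add_distrib]
    rw [hswap fun a b => ∑ c, m a c * t c b]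
    ring
  have hRT : ∑ a, ∑ b, ricTerm e (knProd h gf) T ![e a, e b] * t a b
      = 2 * ∑ a, ∑ b, F a b * t a b := by
    simp only [hric, add_mul, Finset.sum_add_distrib]
    rw [hswap F]
    ring
  simp only [tinner_two]
  change ∑ a, ∑ b, ricTerm e (knProd h gf) T ![e a, e b] * t a b
    = -(n : ℝ) * (∑ a, ∑ b, tact H T ![e a, e b] * t a b)
      - 4 * (∑ a, t a a) * (∑ a, ∑ b, t a b * m a b)
      + 2 * (∑ a, m a a) * (∑ a, ∑ b, t a b * t a b)
  rw [hHT, hRT]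
  change ∑ a, ∑ b, F a b * t a b = _ at hF
  rw [hF]
  ring
end
end

section
/- Let H be a symmetric endomorphism of V and let ω be a p-form on V. Then for all X_1,…,X_p ∈ V: Σ_{i≠j} (ω∘τ_{ij})(X_1,…,H(X_i),…,X_p) = (p−1)·(Hω)(X_1,…,X_p), where the sum runs over ordered pairs 1 ≤ i,j ≤ p with i ≠ j and in (ω∘τ_{ij}) the argument H(X_i) occupies the i-th slot (the l-th slot holding X_l for l ≠ i). -/
/-!
Exchanging slots `i` and `j` in `(X₁,…,H(Xᵢ),…,X_p)` changes the sign of `ω`, so the term for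
`i ≠ j` equals `-ω(X₁,…,H(Xᵢ),…,X_p)`, independently of `j`. Each `i` admits `p - 1` indices
`j ≠ i`, and summing over `i` gives `(p - 1) (Hω)`.
-/

open scoped RealInnerProductSpace BigOperators
open Finset

noncomputable section

variable {V : Type*} [NormedAddCommGroup V] [InnerProductSpace ℝ V]

/-- for a `p`-form, `Σ_{i≠j} (ω∘τ_{ij})(X₁,…,H(Xᵢ),…,X_p) = (p−1)(Hω)`. -/
theorem stmt5 {p : ℕ} (H : V →ₗ[ℝ] V) (hHsym : ∀ X Y : V, ⟪H X, Y⟫ = ⟪X, H Y⟫)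
    (ω : AlternatingMap ℝ V ℝ (Fin p)) :
    ∀ X : Fin p → V,
      (∑ i : Fin p, ∑ j : Fin p, if i = j then 0 else
          ω (Function.update (Function.update X i (X j)) j (H (X i)))) =
        ((p : ℝ) - 1) * tact ⇑H ⇑ω X := by
  intro X
  have key : ∀ i j : Fin p, i ≠ j →
      ω (Function.update (Function.update X i (X j)) j (H (X i))) =
        -ω (Function.update X i (H (X i))) := by
    intro i j hij
    rw [← ω.map_swap _ hij]
    congr 1
    funext l
    simp only [Function.comp_apply, Function.update_apply, Equiv.swap_apply_def]
    split_ifs <;> simp_all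
  have inner : ∀ i : Fin p, (∑ j : Fin p, if i = j then 0 else
      ω (Function.update (Function.update X i (X j)) j (H (X i)))) =
        ((p : ℝ) - 1) * -ω (Function.update X i (H (X i))) := by
    intro i
    have h : ∀ j : Fin p, (if i = j then 0 else
        ω (Function.update (Function.update X i (X j)) j (H (X i)))) =
        -ω (Function.update X i (H (X i))) -
          if i = j then -ω (Function.update X i (H (X i))) else 0 := by
      intro j
      split_ifs with hij
      · simp
      · rw [key i j hij, sub_zero]
    rw [Finset.sum_congr rfl fun j _ => h j, Finset.sum_sub_distrib]
    simp
    ring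
  rw [Finset.sum_congr rfl fun i _ => inner i, ← Finset.mul_sum, tact, Finset.sum_neg_distrib]
end
end

section
/- Let Rm be an algebraic curvature tensor on V and let H be a symmetric endomorphism of V. Then for all X_1, X_2, X_3, X_4 ∈ V: Σ_{i≠j} (Rm∘τ_{ij})(X_1,…,H(X_i),…,X_4) = 0, where the sum runs over ordered pairs 1 ≤ i,j ≤ 4 with i ≠ j and in (Rm∘τ_{ij}) the argument H(X_i) occupies the i-th slot (the l-th slot holding X_l for l ≠ i). -/
/-!
For each fixed `i` the inner sum over `j ≠ i` already vanishes. With `h = H (X i)` in the `i`-th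
argument, the three terms are the values of `Rm` with `h` swapped into each of the other slots.
For `i = 0` they are `Rm(b,h,c,d) + Rm(c,b,h,d) + Rm(d,b,c,h)`, and the pair and skew symmetries
turn this into `-(Rm(h,b,c,d) + Rm(h,c,d,b) + Rm(h,d,b,c))`, which is zero by the first Bianchi
identity. The other three values of `i` reduce to this one by the symmetries of `Rm`.
-/

open scoped RealInnerProductSpace BigOperators
open Finset

noncomputable section

variable {V : Type*} [NormedAddCommGroup V] [InnerProductSpace ℝ V]

/-- for an algebraic curvature tensor, `Σ_{i≠j} (Rm∘τ_{ij})(…,H(Xᵢ),…) = 0`. -/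
theorem stmt8 (H : V →ₗ[ℝ] V) (hHsym : ∀ X Y : V, ⟪H X, Y⟫ = ⟪X, H Y⟫)
    (Rm : MultilinearMap ℝ (fun _ : Fin 4 => V) ℝ)
    (hA : ∀ X Y Z W : V, Rm ![X, Y, Z, W] = -Rm ![Y, X, Z, W])
    (hP : ∀ X Y Z W : V, Rm ![X, Y, Z, W] = Rm ![Z, W, X, Y])
    (hB : ∀ X Y Z W : V,
      Rm ![X, Y, Z, W] + Rm ![Y, Z, X, W] + Rm ![Z, X, Y, W] = 0) :
    ∀ X : Fin 4 → V,
      (∑ i : Fin 4, ∑ j : Fin 4, if i = j then 0 else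
          Rm (Function.update (Function.update X i (X j)) j (H (X i)))) = 0 := by
  intro X
  have hA' : ∀ X Y Z W : V, Rm ![X, Y, Z, W] = -Rm ![X, Y, W, Z] := fun X Y Z W => by
    rw [hP X Y Z W, hA Z W X Y, hP W Z X Y]
  -- `h0`, …, `h3` are the inner sums for `i = 0, …, 3`, with `h` in place of `H (X i)`.
  have h0 : ∀ h b c d : V,
      Rm ![b, h, c, d] + Rm ![c, b, h, d] + Rm ![d, b, c, h] = 0 := fun h b c d => by
    linarith [hB b c d h, hA b h c d, hP h b c d, hA' c d h b, hA c b h d, hP b c h d,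
      hA' h d b c, hP b c d h, hA' b c h d, hP d b c h, hA' c d b h, hP b h c d]
  have h1 : ∀ h a c d : V,
      Rm ![h, a, c, d] + Rm ![a, c, h, d] + Rm ![a, d, c, h] = 0 := fun h a c d => by
    linarith [h0 h a c d, hA a h c d, hA c a h d, hA d a c h]
  have h2 : ∀ h a b d : V,
      Rm ![h, b, a, d] + Rm ![a, h, b, d] + Rm ![a, b, d, h] = 0 := fun h a b d => by
    linarith [h0 h d a b, hP h b a d, hP a h b d, hP a b d h, hP d a b h, hP b d h a,
      hA' a d h b, hA' b d a h, hA' b d h a, hA d h a b, hP d h a b, hA h d a b, hA a d h b]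
  have h3 : ∀ h a b c : V,
      Rm ![h, b, c, a] + Rm ![a, h, c, b] + Rm ![a, b, h, c] = 0 := fun h a b c => by
    linarith [h2 h a b c, hA' h b c a, hA' a h c b, hA' a b h c]
  have s0 := h0 (H (X 0)) (X 1) (X 2) (X 3)
  have s1 := h1 (H (X 1)) (X 0) (X 2) (X 3)
  have s2 := h2 (H (X 2)) (X 0) (X 1) (X 3)
  have s3 := h3 (H (X 3)) (X 0) (X 1) (X 2)
  -- `Rm` as a curried function of four vectors, so that updated arguments evaluate slot by slot.
  obtain ⟨f, hf⟩ : ∃ f : V → V → V → V → ℝ, ∀ Y : Fin 4 → V,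
      Rm Y = f (Y 0) (Y 1) (Y 2) (Y 3) :=
    ⟨fun a b c d => Rm ![a, b, c, d], fun Y => congrArg Rm (by ext k; fin_cases k <;> rfl)⟩
  simp [hf] at s0 s1 s2 s3
  simp [hf, Fin.sum_univ_four, Function.update_apply]
  linarith
end
end

section
/- Let Rm be a (0,4)-tensor on V with Rm(X,Y,Z,W) = −Rm(Y,X,Z,W) = Rm(Z,W,X,Y), and let h be a symmetric bilinear form on V. Define c(X,Z) = Σ_{a=1}^n Rm(X, H(e_a), Z, e_a), where H is the symmetric endomorphism associated to h; then c is a symmetric bilinear form and for all X_1, X_2, X_3, X_4 ∈ V: Σ_{i≠j} g(X_i,X_j)·c_{ij}(h⊗Rm)(X_1,…,X̂_i,…,X̂_j,…,X_4) = 2·(g ⧆ c)(X_1,X_2,X_3,X_4), where the sum runs over ordered pairs 1 ≤ i,j ≤ 4 with i ≠ j and hats denote omitted arguments. -/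
/-!
Expanding `H (e a)` in the orthonormal basis gives `c(X,Z) = Σ h(e_a,e_b) Rm(X,e_a,Z,e_b)`, that is,
`c = c₂₄(h⊗Rm)`; symmetry of `c` then follows from the pair symmetry of `Rm` and the symmetry of `h`.
In the sum over `i ≠ j`, the contractions over `{1,2}` and `{3,4}` vanish because `h` is symmetric and
`Rm` is skew in these slots. The skew and pair symmetries turn each of the other contractions into
`c` of the two remaining arguments, with sign `+` for `{1,3}`, `{2,4}` and `-` for `{1,4}`, `{2,3}`.
Each unordered pair occurs twice, which yields `2 (g ⧆ c)`.
-/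

open scoped RealInnerProductSpace BigOperators
open Finset

noncomputable section

variable {V : Type*} [NormedAddCommGroup V] [InnerProductSpace ℝ V]

/-- The double contraction of a symmetric `S` with a skew `F` vanishes. -/
lemma sum_symm_mul_skew {n : ℕ} (S F : Fin n → Fin n → ℝ) (hS : ∀ a b, S a b = S b a)
    (hF : ∀ a b, F a b = -F b a) : ∑ a, ∑ b, S a b * F a b = 0 := by
  have key : ∑ a, ∑ b, S a b * F a b = -∑ a, ∑ b, S a b * F a b := by
    conv_lhs => rw [Finset.sum_comm]
    simp only [← Finset.sum_neg_distrib]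
    refine Finset.sum_congr rfl fun a _ => Finset.sum_congr rfl fun b _ => ?_
    rw [hS b a, hF b a]; ring
  linarith

/-- `Σ_{i≠j} g(Xᵢ,Xⱼ)·c_{ij}(h⊗Rm) = 2 (g ⧆ c₂₄(h⊗Rm))`, and
`c = c₂₄(h⊗Rm)` is a symmetric bilinear form. -/
theorem stmt9 {n : ℕ} (e : OrthonormalBasis (Fin n) ℝ V)
    (H : V →ₗ[ℝ] V) (hHsym : ∀ X Y : V, ⟪H X, Y⟫ = ⟪X, H Y⟫)
    (h : V → V → ℝ) (hh : ∀ X Y : V, h X Y = ⟪H X, Y⟫)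
    (Rm : MultilinearMap ℝ (fun _ : Fin 4 => V) ℝ)
    (hA : ∀ X Y Z W : V, Rm ![X, Y, Z, W] = -Rm ![Y, X, Z, W])
    (hP : ∀ X Y Z W : V, Rm ![X, Y, Z, W] = Rm ![Z, W, X, Y])
    (c : V → V → ℝ) (hc : ∀ X Z : V, c X Z = ∑ a : Fin n, Rm ![X, H (e a), Z, e a]) :
    (∀ X Z : V, c X Z = c Z X) ∧
    (∀ X X' Z : V, c (X + X') Z = c X Z + c X' Z) ∧
    (∀ (r : ℝ) (X Z : V), c (r • X) Z = r * c X Z) ∧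
    (∀ X Z Z' : V, c X (Z + Z') = c X Z + c X Z') ∧
    (∀ (r : ℝ) (X Z : V), c X (r • Z) = r * c X Z) ∧
    (∀ X : Fin 4 → V,
      (∑ i : Fin 4, ∑ j : Fin 4, if i = j then 0 else
          ⟪X i, X j⟫ *
            ∑ a : Fin n, ∑ b : Fin n, h (e a) (e b) *
              Rm (Function.update (Function.update X i (e a)) j (e b))) =
        2 * knProd gf c (X 0) (X 1) (X 2) (X 3)) := by
  have hsymm : ∀ a b, h (e a) (e b) = h (e b) (e a) := fun a b => by
    rw [hh, hh, hHsym, real_inner_comm]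
  have hA' : ∀ X Y Z W : V, Rm ![X, Y, Z, W] = -Rm ![X, Y, W, Z] := fun X Y Z W => by
    rw [hP, hA, hP]
  have slot0 : ∀ X Y Z W : V, Rm ![X, Y, Z, W] = Rm.toLinearMap ![0, Y, Z, W] 0 X := by
    intro X Y Z W
    rw [MultilinearMap.toLinearMap_apply]
    congr 1; ext k; fin_cases k <;> rfl
  have slot1 : ∀ X Y Z W : V, Rm ![X, Y, Z, W] = Rm.toLinearMap ![X, 0, Z, W] 1 Y := by
    intro X Y Z W
    rw [MultilinearMap.toLinearMap_apply]
    congr 1; ext k; fin_cases k <;> rfl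
  have hHe : ∀ a, H (e a) = ∑ b, h (e a) (e b) • e b := fun a => by
    conv_lhs => rw [← e.sum_repr' (H (e a))]
    exact Finset.sum_congr rfl fun b _ => by rw [hh, real_inner_comm]
  have hc24 : ∀ X Z, ∑ a, ∑ b, h (e a) (e b) * Rm ![X, e a, Z, e b] = c X Z := by
    intro X Z
    rw [hc, Finset.sum_comm]
    refine Finset.sum_congr rfl fun b _ => ?_
    rw [slot1, hHe, map_sum]
    refine Finset.sum_congr rfl fun a _ => ?_
    rw [map_smul, ← slot1, smul_eq_mul, hsymm]
  have hc42 : ∀ X Z, ∑ a, ∑ b, h (e a) (e b) * Rm ![X, e b, Z, e a] = c X Z := by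
    intro X Z
    rw [← hc24, Finset.sum_comm]
    exact Finset.sum_congr rfl fun a _ => Finset.sum_congr rfl fun b _ => by rw [hsymm]
  have hcs : ∀ X Z, c X Z = c Z X := by
    intro X Z
    rw [← hc24 X Z, ← hc42 Z X]
    exact Finset.sum_congr rfl fun a _ => Finset.sum_congr rfl fun b _ => by rw [hP]
  have hadd : ∀ X X' Z : V, c (X + X') Z = c X Z + c X' Z := by
    intro X X' Z
    simp only [hc, ← Finset.sum_add_distrib]
    refine Finset.sum_congr rfl fun a _ => ?_
    rw [slot0, map_add, ← slot0, ← slot0]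
  have hsmul : ∀ (r : ℝ) (X Z : V), c (r • X) Z = r * c X Z := by
    intro r X Z
    simp only [hc, Finset.mul_sum]
    refine Finset.sum_congr rfl fun a _ => ?_
    rw [slot0, map_smul, ← slot0, smul_eq_mul]
  refine ⟨hcs, hadd, hsmul, fun X Z Z' => ?_, fun r X Z => ?_, fun X => ?_⟩
  · rw [hcs, hadd, hcs Z, hcs Z']
  · rw [hcs, hsmul, hcs Z]
  -- Reduces a contraction with `Rm` in slots `i`, `j` to a termwise identity for `Rm`.
  have red : ∀ (i j : Fin 4) (s : ℝ) (F : V → V → ℝ),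
      (∀ u v, Rm (Function.update (Function.update X i u) j v) = s * F u v) →
      ∑ a, ∑ b, h (e a) (e b) * Rm (Function.update (Function.update X i (e a)) j (e b)) =
        s * ∑ a, ∑ b, h (e a) (e b) * F (e a) (e b) := by
    intro i j s F hF
    simp only [hF, Finset.mul_sum]
    exact Finset.sum_congr rfl fun a _ => Finset.sum_congr rfl fun b _ => by ring
  have vec : ∀ Y : Fin 4 → V, Rm Y = Rm ![Y 0, Y 1, Y 2, Y 3] := by
    intro Y
    congr 1; ext k; fin_cases k <;> rfl
  have z01 := sum_symm_mul_skew (fun a b => h (e a) (e b)) (fun a b => Rm ![e a, e b, X 2, X 3])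
    hsymm fun a b => hA _ _ _ _
  have z23 := sum_symm_mul_skew (fun a b => h (e a) (e b)) (fun a b => Rm ![X 0, X 1, e a, e b])
    hsymm fun a b => hA' _ _ _ _
  have r01 := red 0 1 1 (fun u v => Rm ![u, v, X 2, X 3]) fun u v => by
    rw [vec, one_mul]; rfl
  have r10 := red 1 0 (-1) (fun u v => Rm ![u, v, X 2, X 3]) fun u v => by
    rw [vec, hA, neg_one_mul]; rfl
  have r23 := red 2 3 1 (fun u v => Rm ![X 0, X 1, u, v]) fun u v => by
    rw [vec, one_mul]; rfl
  have r32 := red 3 2 (-1) (fun u v => Rm ![X 0, X 1, u, v]) fun u v => by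
    rw [vec, hA', neg_one_mul]; rfl
  have r02 := red 0 2 1 (fun u v => Rm ![X 1, u, X 3, v]) fun u v => by
    rw [vec, hA, hA', neg_neg, one_mul]; rfl
  have r20 := red 2 0 1 (fun u v => Rm ![X 1, v, X 3, u]) fun u v => by
    rw [vec, hA, hA', neg_neg, one_mul]; rfl
  have r13 := red 1 3 1 (fun u v => Rm ![X 0, u, X 2, v]) fun u v => by
    rw [vec, one_mul]; rfl
  have r31 := red 3 1 1 (fun u v => Rm ![X 0, v, X 2, u]) fun u v => by
    rw [vec, one_mul]; rfl
  have r03 := red 0 3 (-1) (fun u v => Rm ![X 1, u, X 2, v]) fun u v => by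
    rw [vec, hA, neg_one_mul]; rfl
  have r30 := red 3 0 (-1) (fun u v => Rm ![X 1, v, X 2, u]) fun u v => by
    rw [vec, hA, neg_one_mul]; rfl
  have r12 := red 1 2 (-1) (fun u v => Rm ![X 0, u, X 3, v]) fun u v => by
    rw [vec, hA', neg_one_mul]; rfl
  have r21 := red 2 1 (-1) (fun u v => Rm ![X 0, v, X 3, u]) fun u v => by
    rw [vec, hA', neg_one_mul]; rfl
  simp only [z01, z23, hc24, hc42] at r01 r10 r23 r32 r02 r20 r13 r31 r03 r30 r12 r21
  simp only [Fin.sum_univ_four, r01, r10, r23, r32, r02, r20, r13, r31, r03, r30, r12, r21]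
  simp only [Fin.reduceEq, if_true, if_false, knProd, gf]
  rw [real_inner_comm (X 0) (X 2), real_inner_comm (X 0) (X 3), real_inner_comm (X 1) (X 2),
    real_inner_comm (X 1) (X 3)]
  ring
end
end

section
/- Let Rm be a (0,4)-tensor on V with Rm(X,Y,Z,W) = −Rm(Y,X,Z,W) = Rm(Z,W,X,Y), and let h be a symmetric bilinear form on V. Then for all X_1, X_2, X_3, X_4 ∈ V: Σ_{i≠j} h(X_i,X_j)·c_{ij}(g⊗Rm)(X_1,…,X̂_i,…,X̂_j,…,X_4) = 2·(h ⧆ Ric)(X_1,X_2,X_3,X_4), where Ric(X,Z) = Σ_{a=1}^n Rm(X,e_a,Z,e_a) is the Ricci contraction of Rm, the sum runs over ordered pairs 1 ≤ i,j ≤ 4 with i ≠ j, and hats denote omitted arguments. -/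
/-!
Since `e` is orthonormal, `c_{ij}(g ⊗ Rm)` puts the same basis vector into slots `i` and `j` and
sums over the basis. The contractions over slots `{1,2}` and `{3,4}` vanish by skew-symmetry, those
over `{1,3}` and `{2,4}` are `Ric`, and those over `{1,4}` and `{2,3}` are `-Ric`. Each unordered
pair occurs twice by symmetry of `h`, which accounts for the factor `2`.
-/

open scoped RealInnerProductSpace BigOperators
open Finset

noncomputable section

variable {V : Type*} [NormedAddCommGroup V] [InnerProductSpace ℝ V]

/-- Contracting with the inner product along an orthonormal basis leaves only the diagonal. -/
lemma sum_inner_mul {n : ℕ} (e : OrthonormalBasis (Fin n) ℝ V) (f : Fin n → Fin n → ℝ) :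
    ∑ a, ∑ b, ⟪e a, e b⟫ * f a b = ∑ a, f a a := by
  simp [orthonormal_iff_ite.mp e.orthonormal]

/-- `Σ_{i≠j} h(Xᵢ,Xⱼ)·c_{ij}(g⊗Rm) = 2 (h ⧆ Ric)`. -/
theorem stmt10 {n : ℕ} (e : OrthonormalBasis (Fin n) ℝ V)
    (h : V →ₗ[ℝ] V →ₗ[ℝ] ℝ) (hsym : ∀ X Y : V, h X Y = h Y X)
    (Rm : MultilinearMap ℝ (fun _ : Fin 4 => V) ℝ)
    (hA : ∀ X Y Z W : V, Rm ![X, Y, Z, W] = -Rm ![Y, X, Z, W])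
    (hP : ∀ X Y Z W : V, Rm ![X, Y, Z, W] = Rm ![Z, W, X, Y])
    (ricc : V → V → ℝ) (hric : ∀ X Z : V, ricc X Z = ∑ a : Fin n, Rm ![X, e a, Z, e a]) :
    ∀ X : Fin 4 → V,
      (∑ i : Fin 4, ∑ j : Fin 4, if i = j then 0 else
          h (X i) (X j) *
            ∑ a : Fin n, ∑ b : Fin n, ⟪e a, e b⟫ *
              Rm (Function.update (Function.update X i (e a)) j (e b))) =
        2 * knProd (fun x y => h x y) ricc (X 0) (X 1) (X 2) (X 3) := by
  intro X
  obtain ⟨x, y, z, w, rfl⟩ : ∃ x y z w, X = ![x, y, z, w] :=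
    ⟨X 0, X 1, X 2, X 3, by ext i; fin_cases i <;> rfl⟩
  -- Skew-symmetry in the last pair of slots follows from the pair symmetry.
  have hB : ∀ X Y Z W : V, Rm ![X, Y, Z, W] = -Rm ![X, Y, W, Z] := fun X Y Z W => by
    rw [hP, hA, hP]
  have h12 : ∀ X Z W : V, Rm ![X, X, Z, W] = 0 := fun X Z W => by linarith [hA X X Z W]
  have h34 : ∀ X Y Z : V, Rm ![X, Y, Z, Z] = 0 := fun X Y Z => by linarith [hB X Y Z Z]
  have h24 : ∀ p q : V, ∑ a, Rm ![p, e a, q, e a] = ricc p q := fun p q => (hric p q).symm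
  have h23 : ∀ p q : V, ∑ a, Rm ![p, e a, e a, q] = -ricc p q := fun p q => by
    rw [hric, ← Finset.sum_neg_distrib]
    exact Finset.sum_congr rfl fun a _ => hB _ _ _ _
  have h14 : ∀ p q : V, ∑ a, Rm ![e a, p, q, e a] = -ricc p q := fun p q => by
    rw [hric, ← Finset.sum_neg_distrib]
    exact Finset.sum_congr rfl fun a _ => hA _ _ _ _
  have h13 : ∀ p q : V, ∑ a, Rm ![e a, p, e a, q] = ricc p q := fun p q => by
    rw [hric]
    exact Finset.sum_congr rfl fun a _ => by rw [hA, hB, neg_neg]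
  have u0 : ∀ p q r s t : V, Function.update ![p, q, r, s] 0 t = ![t, q, r, s] := by
    intros; ext i; fin_cases i <;> rfl
  have u1 : ∀ p q r s t : V, Function.update ![p, q, r, s] 1 t = ![p, t, r, s] := by
    intros; ext i; fin_cases i <;> rfl
  have u2 : ∀ p q r s t : V, Function.update ![p, q, r, s] 2 t = ![p, q, t, s] := by
    intros; ext i; fin_cases i <;> rfl
  have u3 : ∀ p q r s t : V, Function.update ![p, q, r, s] 3 t = ![p, q, r, t] := by
    intros; ext i; fin_cases i <;> rfl
  simp only [sum_inner_mul e, Fin.sum_univ_four, u0, u1, u2, u3, h12, h34, h24, h23, h14, h13,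
    Finset.sum_const_zero, mul_zero, knProd]
  simp
  rw [hsym z x, hsym w x, hsym z y, hsym w y]
  ring
end
end

section
/- Let h be a symmetric bilinear form on V. Every Weyl tensor W on V satisfies ⟨Ric_{h⧆g}(W), g ⧆ g⟩ = 0. -/
/-!
The inner product of `Ric_R(T)` with a tensor `S` can be rewritten, by moving the sum over the
replaced index from `T` to `S` (`sum_replace_index`), as
`Σ_J Σ_a Σ_i (R(e_a, e_{J i}) T)(e_J) · S(e_{J 0}, …, e_a, …)` with `e_a` in the `i`-th slot.
Since `R(X, Y)` is skew in `X, Y`, only the skew part in `(a, J i)` of the second factor counts,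
and that part is the action of the infinitesimal rotation `e_a ∧ e_b` on `S`. For `S = g ⧆ g`,
which is invariant under rotations, it vanishes; `sum_skew_mul_kn_eq_zero` is this invariance
written in components.
-/

open scoped RealInnerProductSpace BigOperators
open Finset

noncomputable section

variable {V : Type*} [NormedAddCommGroup V] [InnerProductSpace ℝ V]

/-- Moves the replaced index from one factor to the other: the map
`(I, j) ↦ (I with j at i, I i)` is an involution. -/
lemma sum_replace_index {n k : ℕ} (i : Fin k) (F : Fin n → Fin n → (Fin k → Fin n) → ℝ)
    (S : (Fin k → Fin n) → ℝ) :
    ∑ I : Fin k → Fin n, ∑ j, F (I i) j (Function.update I i j) * S I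
      = ∑ J : Fin k → Fin n, ∑ a, F a (J i) J * S (Function.update J i a) := by
  rw [← Fintype.sum_prod_type', ← Fintype.sum_prod_type']
  refine Fintype.sum_equiv
    (Function.Involutive.toPerm
      (fun p : (Fin k → Fin n) × Fin n => (Function.update p.1 i p.2, p.1 i)) ?_) _ _ ?_
  · rintro ⟨I, j⟩
    simp
  · rintro ⟨I, j⟩
    simp [Function.Involutive.toPerm]

/-- The rotation invariance of `g ⧆ g` in components, tested against a skew matrix `G`. -/
lemma sum_skew_mul_kn_eq_zero {n : ℕ} (e : OrthonormalBasis (Fin n) ℝ V)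
    (G : Fin n → Fin n → ℝ) (hG : ∀ a b, G a b = -G b a) (p q r s : Fin n) :
    ∑ a, (G a p * knProd gf gf (e a) (e q) (e r) (e s)
      + G a q * knProd gf gf (e p) (e a) (e r) (e s)
      + G a r * knProd gf gf (e p) (e q) (e a) (e s)
      + G a s * knProd gf gf (e p) (e q) (e r) (e a)) = 0 := by
  have hδ : ∀ a b, gf (e a) (e b) = if a = b then (1 : ℝ) else 0 := fun a b =>
    orthonormal_iff_ite.mp e.orthonormal a b
  simp only [knProd, hδ, mul_add, mul_sub, sum_add_distrib, sum_sub_distrib]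
  simp only [mul_ite, mul_one, mul_zero, sum_ite_eq, sum_ite_eq',
    mem_univ, if_true, sum_ite_irrel, sum_const_zero]
  rw [hG r p, hG s p, hG s q, hG r q]
  split_ifs <;> ring

/-- For `R = s₁ ⧆ s₂` the action of `R(X, Y)` on a tensor is skew in `X, Y`; multilinearity of `T`
is needed to pull the sign out of each slot. -/
lemma tact_curvOp_kn_skew {n k : ℕ} (e : Fin n → V) (s₁ s₂ : V → V → ℝ)
    (T : MultilinearMap ℝ (fun _ : Fin k => V) ℝ) (X Y : V) (Z : Fin k → V) :
    tact (curvOp e (knProd s₁ s₂) X Y) T Z = -tact (curvOp e (knProd s₁ s₂) Y X) T Z := by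
  have hL : ∀ Z, curvOp e (knProd s₁ s₂) X Y Z = (-1 : ℝ) • curvOp e (knProd s₁ s₂) Y X Z := by
    intro Z
    simp only [curvOp, smul_sum, smul_smul]
    refine sum_congr rfl fun a _ => ?_
    congr 1
    simp only [knProd]
    ring
  simp only [tact, hL, MultilinearMap.map_update_smul, smul_eq_mul, ← mul_sum]
  ring

/-- for a Weyl tensor, `⟨Ric_{h⧆g}(W), g ⧆ g⟩ = 0`. -/
theorem stmt13 {n : ℕ} (e : OrthonormalBasis (Fin n) ℝ V)
    (h : V →ₗ[ℝ] V →ₗ[ℝ] ℝ) (hsym : ∀ X Y : V, h X Y = h Y X)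
    (W : MultilinearMap ℝ (fun _ : Fin 4 => V) ℝ)
    (hA : ∀ x y z w : V, W ![x, y, z, w] = -W ![y, x, z, w])
    (hP : ∀ x y z w : V, W ![x, y, z, w] = W ![z, w, x, y])
    (hB : ∀ x y z w : V,
      W ![x, y, z, w] + W ![y, z, x, w] + W ![z, x, y, w] = 0)
    (hRic : ∀ x z : V, (∑ a : Fin n, W ![x, e a, z, e a]) = 0) :
    tinner ⇑e (ricTerm ⇑e (knProd (fun X Y => h X Y) gf) ⇑W)
        (fun X : Fin 4 → V => knProd gf gf (X 0) (X 1) (X 2) (X 3)) = 0 := by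
  set G : Fin n → Fin n → (Fin 4 → Fin n) → ℝ := fun a b J =>
    tact (curvOp e (knProd (fun X Y => h X Y) gf) (e a) (e b)) W (fun m => e (J m)) with hGdef
  set S : (Fin 4 → Fin n) → ℝ := fun J =>
    knProd gf gf (e (J 0)) (e (J 1)) (e (J 2)) (e (J 3)) with hSdef
  have hupd : ∀ (I : Fin 4 → Fin n) (i : Fin 4) (j : Fin n),
      Function.update (fun m => e (I m)) i (e j) = fun m => e (Function.update I i j m) := by
    intro I i j
    funext m
    by_cases hm : m = i
    · subst hm; simp
    · simp [hm]
  have hstart : tinner ⇑e (ricTerm ⇑e (knProd (fun X Y => h X Y) gf) ⇑W)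
        (fun X : Fin 4 → V => knProd gf gf (X 0) (X 1) (X 2) (X 3))
      = ∑ i : Fin 4, ∑ I : Fin 4 → Fin n, ∑ j, G (I i) j (Function.update I i j) * S I := by
    rw [sum_comm]
    simp only [tinner, ricTerm, hupd, sum_mul, hGdef, hSdef]
  rw [hstart]
  simp only [sum_replace_index]
  rw [sum_comm]
  refine sum_eq_zero fun J _ => ?_
  rw [sum_comm]
  have key := sum_skew_mul_kn_eq_zero e (fun a b => G a b J)
    (fun a b => tact_curvOp_kn_skew _ _ _ W _ _ _) (J 0) (J 1) (J 2) (J 3)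
  rw [← key]
  refine sum_congr rfl fun a _ => ?_
  simp [Fin.sum_univ_four, hSdef, Function.update]
end
end

section
/- For every n ≥ 4 there exist trace-free symmetric bilinear forms h_1, h_2 on an n-dimensional real inner product space V such that the Kulkarni–Nomizu product h_1 ⧆ h_2 is a nonzero Weyl tensor, i.e., h_1 ⧆ h_2 ≠ 0, it satisfies the first Bianchi identity, and its Ricci contraction vanishes. -/
/-!
The Bianchi identity holds for the Kulkarni–Nomizu product of any two symmetric forms. For
trace-free symmetric `h₁`, `h₂` the Ricci contraction of `h₁ ⧆ h₂` is `-(h₁ ∘ h₂ + h₂ ∘ h₁)`, so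
it suffices to find trace-free forms whose associated endomorphisms have both products zero.
In the dual basis `ε₀, …, ε_{n-1}`, the forms `h₁ = ε₀ ⊗ ε₀ - ε₁ ⊗ ε₁` and
`h₂ = ε₂ ⊗ ε₃ + ε₃ ⊗ ε₂` live on orthogonal planes, and
`(h₁ ⧆ h₂)(e₀, e₂, e₀, e₃) = h₁(e₀, e₀) h₂(e₂, e₃) = 1`.
-/

open scoped RealInnerProductSpace BigOperators
open Finset

noncomputable section

variable {V : Type*} [NormedAddCommGroup V] [InnerProductSpace ℝ V]

/-- for `n ≥ 4` there are trace-free symmetric bilinear forms `h₁`, `h₂`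
whose Kulkarni–Nomizu product is a nonzero Weyl tensor. -/
theorem stmt14 {n : ℕ} (hn : 4 ≤ n) (e : OrthonormalBasis (Fin n) ℝ V) :
    ∃ h₁ h₂ : V →ₗ[ℝ] V →ₗ[ℝ] ℝ,
      (∀ X Y : V, h₁ X Y = h₁ Y X) ∧
      (∀ X Y : V, h₂ X Y = h₂ Y X) ∧
      (∑ a : Fin n, h₁ (e a) (e a)) = 0 ∧
      (∑ a : Fin n, h₂ (e a) (e a)) = 0 ∧
      (∃ X Y Z W : V, knProd (fun x y => h₁ x y) (fun x y => h₂ x y) X Y Z W ≠ 0) ∧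
      (∀ X Y Z W : V,
        knProd (fun x y => h₁ x y) (fun x y => h₂ x y) X Y Z W +
          knProd (fun x y => h₁ x y) (fun x y => h₂ x y) Y Z X W +
          knProd (fun x y => h₁ x y) (fun x y => h₂ x y) Z X Y W = 0) ∧
      (∀ X Z : V,
        (∑ a : Fin n, knProd (fun x y => h₁ x y) (fun x y => h₂ x y) X (e a) Z (e a)) = 0) := by
  obtain ⟨i, j, k, l, hij, hik, hil, hjk, hjl, hkl⟩ :
      ∃ i j k l : Fin n, i ≠ j ∧ i ≠ k ∧ i ≠ l ∧ j ≠ k ∧ j ≠ l ∧ k ≠ l :=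
    ⟨⟨0, by omega⟩, ⟨1, by omega⟩, ⟨2, by omega⟩, ⟨3, by omega⟩, by simp⟩
  -- `p a` is the dual basis covector of `e a`.
  let p : Fin n → V →ₗ[ℝ] ℝ := fun a => innerₛₗ ℝ (e a)
  have hp : ∀ a b, p a (e b) = if a = b then 1 else 0 := fun a b =>
    orthonormal_iff_ite.mp e.orthonormal a b
  clear_value p
  refine ⟨(p i).smulRight (p i) - (p j).smulRight (p j),
    (p k).smulRight (p l) + (p l).smulRight (p k), ?_, ?_, ?_, ?_, ?_, ?_, ?_⟩
  · intro X Y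
    simp [mul_comm]
  · intro X Y
    simp
    ring
  · simp only [LinearMap.sub_apply, LinearMap.smulRight_apply, LinearMap.smul_apply, smul_eq_mul]
    simp [hp]
  · simp only [LinearMap.add_apply, LinearMap.smulRight_apply, LinearMap.smul_apply, smul_eq_mul]
    simp [hp, Finset.sum_add_distrib, hkl, hkl.symm]
  · refine ⟨e i, e k, e i, e l, ?_⟩
    simp [knProd, hp, hij.symm, hik, hil, hkl.symm, hik.symm, hil.symm, hjk]
  · intro X Y Z W
    simp [knProd]
    ring
  · intro X Z
    simp only [LinearMap.sub_apply, LinearMap.add_apply, LinearMap.smulRight_apply,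
      LinearMap.smul_apply, smul_eq_mul, knProd]
    simp [hp, Finset.sum_add_distrib, Finset.sum_sub_distrib, mul_add, sub_mul, hik, hil, hkl,
      hkl.symm, hjk, hjl]
end
end

section
/- Let S be a symmetric endomorphism of V with eigenvalues μ_1 ≤ μ_2 ≤ … ≤ μ_n (listed with multiplicity). Then every p-form ω on V with 1 ≤ p ≤ n satisfies −⟨Sω, ω⟩ ≥ (μ_1 + μ_2 + … + μ_p)·|ω|². -/
/-!
The pairing `tinner` of two multilinear forms does not depend on the orthonormal basis
(`tinner_basis_indep`), so it may be computed in the eigenbasis `v` of `S`. There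
`-(Sω)(v_I) = (∑ i, μ (I i)) ω(v_I)` for each multi-index `I`, and the claim holds summand by
summand: `ω(v_I) = 0` unless `I` is injective, and in that case `∑ i, μ (I i)` is a sum of `μ`
over `p` distinct indices, hence at least the sum of the `p` smallest values
(`sum_castLE_le_sum_of_injective`).
-/

open scoped RealInnerProductSpace BigOperators
open Finset

noncomputable section

variable {V : Type*} [NormedAddCommGroup V] [InnerProductSpace ℝ V]

/-- Expand each `e (I m)` in the basis `v`; the coefficients contract by orthonormality of the
rows of the transition matrix. -/
lemma tinner_basis_indep {n k : ℕ} (e v : OrthonormalBasis (Fin n) ℝ V)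
    (A B : MultilinearMap ℝ (fun _ : Fin k => V) ℝ) :
    tinner ⇑e ⇑A ⇑B = tinner ⇑v ⇑A ⇑B := by
  have expand : ∀ (C : MultilinearMap ℝ (fun _ : Fin k => V) ℝ) (I : Fin k → Fin n),
      C (fun m => e (I m)) =
        ∑ J : Fin k → Fin n, (∏ m, ⟪v (J m), e (I m)⟫) * C (fun m => v (J m)) := by
    intro C I
    have h : (fun m => e (I m)) = fun m => ∑ j, ⟪v j, e (I m)⟫ • v j := by
      funext m
      exact (v.sum_repr' (e (I m))).symm
    rw [h, MultilinearMap.map_sum]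
    refine Finset.sum_congr rfl fun J _ => ?_
    rw [MultilinearMap.map_smul_univ, smul_eq_mul]
  have orth : ∀ J K : Fin k → Fin n,
      ∑ I : Fin k → Fin n, (∏ m, ⟪v (J m), e (I m)⟫) * (∏ m, ⟪v (K m), e (I m)⟫) =
        if J = K then 1 else 0 := by
    intro J K
    simp_rw [← Finset.prod_mul_distrib]
    rw [← Fintype.prod_sum (fun m i => ⟪v (J m), e i⟫ * ⟪v (K m), e i⟫)]
    have h : ∀ m, ∑ i, ⟪v (J m), e i⟫ * ⟪v (K m), e i⟫ = if J m = K m then (1 : ℝ) else 0 := by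
      intro m
      rw [← v.inner_eq_ite (J m) (K m), ← e.sum_inner_mul_inner]
      exact Finset.sum_congr rfl fun i _ => by rw [real_inner_comm (v (K m))]
    simp_rw [h, Finset.prod_ite_zero, funext_iff]
    simp
  unfold tinner
  simp_rw [expand A, expand B, Finset.sum_mul_sum]
  rw [Finset.sum_comm]
  refine Finset.sum_congr rfl fun J _ => ?_
  rw [Finset.sum_comm]
  have h : ∀ K : Fin k → Fin n,
      ∑ I : Fin k → Fin n, (∏ m, ⟪v (J m), e (I m)⟫) * A (fun m => v (J m)) *
        ((∏ m, ⟪v (K m), e (I m)⟫) * B (fun m => v (K m))) =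
      (if J = K then 1 else 0) * (A (fun m => v (J m)) * B (fun m => v (K m))) := by
    intro K
    rw [← orth, Finset.sum_mul]
    exact Finset.sum_congr rfl fun I _ => by ring
  simp_rw [h]
  simp

/-- A sum of a monotone family over `p` distinct indices is at least the sum of its first `p`
terms: list the indices increasingly; the `i`-th one is at least `i`. -/
lemma sum_castLE_le_sum_of_injective {n p : ℕ} (hpn : p ≤ n) (μ : Fin n → ℝ) (hμ : Monotone μ)
    (I : Fin p → Fin n) (hI : Function.Injective I) :
    ∑ i : Fin p, μ (Fin.castLE hpn i) ≤ ∑ i, μ (I i) := by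
  have hcard : (univ.image I).card = p := by
    rw [Finset.card_image_of_injective _ hI]; simp
  have h1 : ∑ i, μ (I i) = ∑ i, μ ((univ.image I).orderEmbOfFin hcard i) := by
    rw [← Finset.sum_image (s := univ) (g := I) (f := μ) (fun a _ b _ h => hI h),
      ← Finset.sum_image (s := univ) (g := (univ.image I).orderEmbOfFin hcard) (f := μ)
        (fun a _ b _ h => (RelEmbedding.injective _) h),
      Finset.image_orderEmbOfFin_univ]
  rw [h1]
  refine Finset.sum_le_sum fun i _ => hμ ?_
  have key : ∀ (m : ℕ) (hm : m < p),
      m ≤ ((univ.image I).orderEmbOfFin hcard ⟨m, hm⟩ : ℕ) := by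
    intro m
    induction m with
    | zero => intro _; exact Nat.zero_le _
    | succ m ih =>
      intro hm
      have hlt : (univ.image I).orderEmbOfFin hcard ⟨m, by omega⟩ <
          (univ.image I).orderEmbOfFin hcard ⟨m + 1, hm⟩ :=
        (OrderEmbedding.strictMono _) (by simp)
      have := ih (by omega)
      have h2 := Fin.lt_def.mp hlt
      omega
  exact Fin.le_def.mpr (key i i.2)

/-- The tensor `S T` for a linear map `S`, bundled as a multilinear map. -/
def tactMultilinear {k : ℕ} (S : V →ₗ[ℝ] V) (T : MultilinearMap ℝ (fun _ : Fin k => V) ℝ) :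
    MultilinearMap ℝ (fun _ : Fin k => V) ℝ :=
  -∑ i, T.compLinearMap (Function.update (fun _ => LinearMap.id) i S)

lemma coe_tactMultilinear {k : ℕ} (S : V →ₗ[ℝ] V)
    (T : MultilinearMap ℝ (fun _ : Fin k => V) ℝ) :
    ⇑(tactMultilinear S T) = tact ⇑S ⇑T := by
  funext X
  simp only [tactMultilinear, tact, neg_apply, _root_.sum_apply,
    MultilinearMap.compLinearMap_apply]
  congr 1
  refine Finset.sum_congr rfl fun i _ => congrArg T ?_
  funext j
  by_cases h : j = i
  · subst h; simp
  · simp [h]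

/-- `−⟨Sω, ω⟩ ≥ (μ₁ + ⋯ + μ_p)|ω|²` for the ordered eigenvalues `μ` of the
symmetric endomorphism `S`. -/
theorem stmt17 {n p : ℕ} (hp : 1 ≤ p) (hpn : p ≤ n)
    (e : OrthonormalBasis (Fin n) ℝ V)
    (S : V →ₗ[ℝ] V) (hSsym : ∀ X Y : V, ⟪S X, Y⟫ = ⟪X, S Y⟫)
    (μ : Fin n → ℝ) (hμ : Monotone μ)
    (v : OrthonormalBasis (Fin n) ℝ V) (hv : ∀ i : Fin n, S (v i) = μ i • v i)
    (ω : AlternatingMap ℝ V ℝ (Fin p)) :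
    -(tinner ⇑e (tact ⇑S ⇑ω) ⇑ω) ≥
      (∑ i : Fin p, μ (Fin.castLE hpn i)) * tinner ⇑e ⇑ω ⇑ω := by
  classical
  have hind : ∀ T : MultilinearMap ℝ (fun _ : Fin p => V) ℝ,
      tinner ⇑e ⇑T ⇑ω = tinner ⇑v ⇑T ⇑ω := fun T => tinner_basis_indep e v T ω.toMultilinearMap
  have h1 : tinner ⇑e (tact ⇑S ⇑ω) ⇑ω = tinner ⇑v (tact ⇑S ⇑ω) ⇑ω := by
    have h := hind (tactMultilinear S ω.toMultilinearMap)
    rwa [coe_tactMultilinear] at h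
  have h2 : tinner ⇑e ⇑ω ⇑ω = tinner ⇑v ⇑ω ⇑ω := hind ω.toMultilinearMap
  rw [h1, h2]
  unfold tinner
  rw [ge_iff_le, ← Finset.sum_neg_distrib, Finset.mul_sum]
  refine Finset.sum_le_sum fun I _ => ?_
  have hact : tact ⇑S ⇑ω (fun m => v (I m)) = -((∑ i, μ (I i)) * ω (fun m => v (I m))) := by
    unfold tact
    rw [Finset.sum_mul]
    congr 1
    refine Finset.sum_congr rfl fun i _ => ?_
    rw [hv, AlternatingMap.map_update_smul, Function.update_eq_self, smul_eq_mul]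
  rw [hact]
  by_cases hI : Function.Injective I
  · have h := sum_castLE_le_sum_of_injective hpn μ hμ I hI
    nlinarith [mul_le_mul_of_nonneg_right h (mul_self_nonneg (ω (fun m => v (I m))))]
  · have h0 : ω (fun m => v (I m)) = 0 :=
      ω.map_eq_zero_of_not_injective _ fun h => hI fun a b hab => h (by simp only [hab])
    simp [h0]
end
end
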